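/- Let G be a finite simple graph with n vertices and e edges, minimum degree δ ≥ 1, maximum degree Δ, and independence number β. Then Inv(G) ≥ (n − β)/Δ + (1/(β·Δ³))·( 2β·(β·δ² + e²/(n − β)) − e² − 2β·(n − β)·Δ² ), with equality if and only if G is a regular balanced bipartite graph. -/

import Mathlib

open Finset

/-- The first Zagreb index of a graph: the sum of the squares of the vertex degrees. -/
def zagreb1 {V : Type*} [Fintype V] (G : SimpleGraph V) [DecidableRel G.Adj] : ℝ :=
  ∑ u, (G.degree u : ℝ) ^ 2

/-- The forgotten topological index of a graph: the sum of the cubes of the vertex degrees. -/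
def forgottenIndex {V : Type*} [Fintype V] (G : SimpleGraph V) [DecidableRel G.Adj] : ℝ :=
  ∑ u, (G.degree u : ℝ) ^ 3

/-- The inverse degree of a graph: the sum of the reciprocals of the vertex degrees. -/
noncomputable def invDegree {V : Type*} [Fintype V] (G : SimpleGraph V) [DecidableRel G.Adj] : ℝ :=
  ∑ u, 1 / (G.degree u : ℝ)

/-- The independence number of a graph: the largest cardinality of a set of pairwise
nonadjacent vertices. -/
noncomputable def indepNum {V : Type*} [Fintype V] (G : SimpleGraph V) : ℕ :=
  sSup {k | ∃ s : Finset V, s.card = k ∧ ∀ u ∈ s, ∀ v ∈ s, ¬ G.Adj u v}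

/-- A graph is a regular balanced bipartite graph if its vertices can be partitioned into
two parts of equal size with every edge joining the two parts, and all vertices have the
same degree. -/
def IsRegularBalancedBipartite {V : Type*} [Fintype V] (G : SimpleGraph V) [DecidableRel G.Adj] : Prop :=
  ∃ (A : Finset V) (r : ℕ), 2 * A.card = Fintype.card V ∧
    (∀ u v, G.Adj u v → (u ∈ A ↔ v ∉ A)) ∧ G.IsRegularOfDegree r

/-- A graph is `k`-connected if it has more than `k` vertices and removing any set of
fewer than `k` vertices leaves a connected graph. -/
def IsKConnected {V : Type*} [Fintype V] (G : SimpleGraph V) (k : ℕ) : Prop :=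
  k < Fintype.card V ∧
    ∀ S : Finset V, S.card < k → (G.induce (↑S : Set V)ᶜ).Connected

/-- A graph is traceable if it has a Hamiltonian path. -/
def IsTraceable {V : Type*} [DecidableEq V] (G : SimpleGraph V) : Prop :=
  ∃ (u v : V) (p : G.Walk u v), p.IsHamiltonian

/-- The independence number is attained by some independent set. -/
theorem exists_indep_card_eq_indepNum {V : Type*} [Fintype V] (G : SimpleGraph V) :
    ∃ s : Finset V, s.card = indepNum G ∧ ∀ u ∈ s, ∀ v ∈ s, ¬ G.Adj u v := by
  refine Nat.sSup_mem (s := {k | ∃ s : Finset V, s.card = k ∧ ∀ u ∈ s, ∀ v ∈ s, ¬ G.Adj u v})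
    ⟨0, ∅, by simp⟩ ⟨Fintype.card V, ?_⟩
  rintro k ⟨s, rfl, -⟩
  exact s.card_le_univ

theorem card_le_indepNum {V : Type*} [Fintype V] (G : SimpleGraph V) (s : Finset V)
    (hs : ∀ u ∈ s, ∀ v ∈ s, ¬ G.Adj u v) : s.card ≤ indepNum G := by
  refine le_csSup ⟨Fintype.card V, ?_⟩ ⟨s, rfl, hs⟩
  rintro k ⟨t, rfl, -⟩
  exact t.card_le_univ

theorem nonempty_of_one_le_minDegree {V : Type*} [Fintype V] {G : SimpleGraph V}
    [DecidableRel G.Adj] (hδ : 1 ≤ G.minDegree) : Nonempty V := by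
  by_contra hV
  rw [not_nonempty_iff] at hV
  simp at hδ

theorem card_mul_minDegree_le_sum_degree {V : Type*} [Fintype V] (G : SimpleGraph V)
    [DecidableRel G.Adj] (s : Finset V) :
    s.card * G.minDegree ≤ ∑ u ∈ s, G.degree u := by
  simpa using Finset.card_nsmul_le_sum s _ _ fun u _ => G.minDegree_le_degree u

section Independent

variable {V : Type*} [Fintype V] [DecidableEq V] (G : SimpleGraph V) [DecidableRel G.Adj]
  (s : Finset V)

/-- The degree sum over an independent set counts the edges meeting that set. -/
theorem sum_degree_eq_card_biUnion (hs : ∀ u ∈ s, ∀ v ∈ s, ¬ G.Adj u v) :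
    ∑ u ∈ s, G.degree u = (s.biUnion fun u => G.incidenceFinset u).card := by
  rw [Finset.card_biUnion]
  · simp
  · intro u hu v hv huv
    refine Finset.disjoint_left.2 fun x hxu hxv => ?_
    rw [SimpleGraph.mem_incidenceFinset] at hxu hxv
    exact hs u hu v hv (G.adj_of_mem_incidenceSet huv hxu hxv)

theorem biUnion_incidenceFinset_subset :
    (s.biUnion fun u => G.incidenceFinset u) ⊆ G.edgeFinset := by
  intro x hx
  obtain ⟨u, -, hx⟩ := Finset.mem_biUnion.1 hx
  exact G.incidenceFinset_subset u hx

theorem sum_degree_le_card_edgeFinset (hs : ∀ u ∈ s, ∀ v ∈ s, ¬ G.Adj u v) :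
    ∑ u ∈ s, G.degree u ≤ G.edgeFinset.card := by
  rw [sum_degree_eq_card_biUnion G s hs]
  exact Finset.card_le_card (biUnion_incidenceFinset_subset G s)

/-- If the edges meeting an independent set are all the edges, the set is one side of a
bipartition. -/
theorem mem_iff_notMem_of_sum_degree_eq (hs : ∀ u ∈ s, ∀ v ∈ s, ¬ G.Adj u v)
    (h : ∑ u ∈ s, G.degree u = G.edgeFinset.card) (u v : V) (huv : G.Adj u v) :
    u ∈ s ↔ v ∉ s := by
  refine ⟨fun hu hv => hs u hu v hv huv, fun hv => ?_⟩
  rw [sum_degree_eq_card_biUnion G s hs] at h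
  have hmem : s(u, v) ∈ s.biUnion fun u => G.incidenceFinset u := by
    rw [Finset.eq_of_subset_of_card_le (biUnion_incidenceFinset_subset G s) h.ge]
    simpa using huv
  obtain ⟨w, hw, hx⟩ := Finset.mem_biUnion.1 hmem
  rw [SimpleGraph.mem_incidenceFinset] at hx
  rcases Sym2.mem_iff.1 hx.2 with rfl | rfl
  · exact hw
  · exact absurd hw hv

theorem card_edgeFinset_le_card_compl_mul_maxDegree (hs : ∀ u ∈ s, ∀ v ∈ s, ¬ G.Adj u v) :
    G.edgeFinset.card ≤ sᶜ.card * G.maxDegree := by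
  have hsum := G.sum_degrees_eq_twice_card_edges
  rw [← Finset.sum_add_sum_compl s] at hsum
  have hle := sum_degree_le_card_edgeFinset G s hs
  have hcompl : ∑ u ∈ sᶜ, G.degree u ≤ sᶜ.card * G.maxDegree := by
    simpa using Finset.sum_le_card_nsmul sᶜ _ _ fun u _ => G.degree_le_maxDegree u
  lia

end Independent

theorem card_div_maxDegree_le_invDegree {V : Type*} [Fintype V] (G : SimpleGraph V)
    [DecidableRel G.Adj] (hδ : 1 ≤ G.minDegree) :
    (Fintype.card V : ℝ) / G.maxDegree ≤ invDegree G := by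
  have h := Finset.card_nsmul_le_sum Finset.univ (fun u => 1 / (G.degree u : ℝ))
    (1 / (G.maxDegree : ℝ)) fun u _ => by
      have hpos : 0 < G.degree u := hδ.trans (G.minDegree_le_degree u)
      have hle := G.degree_le_maxDegree u
      gcongr
  rw [div_eq_mul_one_div]
  simpa [invDegree] using h

section Arithmetic

variable {b m d D e : ℝ}

theorem add_div_sub_bound_eq (hb : 0 < b) (hm : 0 < m) (hD : 0 < D) :
    (b + m) / D - (m / D + (1 / (b * D ^ 3)) *
        (2 * b * (b * d ^ 2 + e ^ 2 / m) - e ^ 2 - 2 * b * m * D ^ 2)) =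
      ((2 * b - m) * (m ^ 2 * D ^ 2 - e ^ 2) + m * b ^ 2 * (D ^ 2 - d ^ 2)
        + m * (m ^ 2 * D ^ 2 - b ^ 2 * d ^ 2)) / (b * m * D ^ 3) := by
  field_simp
  ring

theorem bound_le_add_div (hb : 0 < b) (hm : 0 < m) (hd : 0 < d) (hdD : d ≤ D)
    (hbe : b * d ≤ e) (hem : e ≤ m * D) :
    m / D + (1 / (b * D ^ 3)) *
        (2 * b * (b * d ^ 2 + e ^ 2 / m) - e ^ 2 - 2 * b * m * D ^ 2) ≤ (b + m) / D ∧
    (m / D + (1 / (b * D ^ 3)) *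
        (2 * b * (b * d ^ 2 + e ^ 2 / m) - e ^ 2 - 2 * b * m * D ^ 2) = (b + m) / D →
      d = D ∧ m = b ∧ e = b * d) := by
  have hD : 0 < D := hd.trans_le hdD
  have hbd : 0 < b * d := mul_pos hb hd
  have hkey := add_div_sub_bound_eq (d := d) (e := e) hb hm hD
  have hden : 0 < b * m * D ^ 3 := by positivity
  have hdD2 : d ^ 2 ≤ D ^ 2 := by gcongr
  have he2 : e ^ 2 ≤ m ^ 2 * D ^ 2 := by
    rw [← mul_pow]; exact pow_le_pow_left₀ (by linarith) hem 2
  have hbd2 : b ^ 2 * d ^ 2 ≤ m ^ 2 * D ^ 2 := by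
    rw [← mul_pow, ← mul_pow]; exact pow_le_pow_left₀ hbd.le (hbe.trans hem) 2
  rcases le_or_gt m (2 * b) with hmb | hmb
  · have h₁ : 0 ≤ (2 * b - m) * (m ^ 2 * D ^ 2 - e ^ 2) :=
      mul_nonneg (by linarith) (by linarith)
    have h₂ : 0 ≤ m * b ^ 2 * (D ^ 2 - d ^ 2) := mul_nonneg (by positivity) (by linarith)
    have h₃ : 0 ≤ m * (m ^ 2 * D ^ 2 - b ^ 2 * d ^ 2) := mul_nonneg hm.le (by linarith)
    refine ⟨?_, fun heq => ?_⟩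
    · rw [← sub_nonneg, hkey]
      positivity
    · rw [heq, sub_self, eq_comm, div_eq_zero_iff, or_iff_left hden.ne'] at hkey
      have h₂' : m * b ^ 2 * (D ^ 2 - d ^ 2) = 0 := by linarith
      have h₃' : m * (m ^ 2 * D ^ 2 - b ^ 2 * d ^ 2) = 0 := by linarith
      have hdD' : d = D := by
        have := (mul_eq_zero.1 h₂').resolve_left (by positivity)
        exact (pow_left_inj₀ hd.le hD.le two_ne_zero).1 (by linarith)
      have hmb' : m * D = b * d := by
        have := (mul_eq_zero.1 h₃').resolve_left hm.ne'
        exact (pow_left_inj₀ (by positivity) hbd.le two_ne_zero).1 (by linarith)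
      refine ⟨hdD', ?_, by linarith⟩
      rw [hdD'] at hmb'
      exact mul_right_cancel₀ hD.ne' hmb'
  · have hpos : 0 < (2 * b - m) * (m ^ 2 * D ^ 2 - e ^ 2) + m * b ^ 2 * (D ^ 2 - d ^ 2)
        + m * (m ^ 2 * D ^ 2 - b ^ 2 * d ^ 2) := by
      have h₁ : 0 ≤ (m - 2 * b) * e ^ 2 := mul_nonneg (by linarith) (sq_nonneg e)
      have h₂ : 0 ≤ m * b ^ 2 * (D ^ 2 - d ^ 2) := mul_nonneg (by positivity) (by linarith)
      have h₃ : 0 < b * m * D ^ 2 * (2 * m - b) := mul_pos (by positivity) (by linarith)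
      linarith
    have hlt := div_pos hpos hden
    rw [← hkey, sub_pos] at hlt
    exact ⟨hlt.le, fun heq => absurd heq hlt.ne⟩

end Arithmetic

/-- A regular balanced bipartite graph of positive degree `r` on `n` vertices has `n / 2` as
independence number and `r * n / 2` edges. -/
theorem IsRegularBalancedBipartite.exists_parameters {V : Type*} [Fintype V] [DecidableEq V]
    {G : SimpleGraph V} [DecidableRel G.Adj] (h : IsRegularBalancedBipartite G)
    (hδ : 1 ≤ G.minDegree) :
    ∃ r : ℕ, G.IsRegularOfDegree r ∧ 2 * indepNum G = Fintype.card V ∧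
      G.edgeFinset.card = indepNum G * r := by
  obtain ⟨A, r, hA, hbip, hreg⟩ := h
  have hle : A.card ≤ indepNum G :=
    card_le_indepNum G A fun u hu v hv huv => (hbip u v huv).1 hu hv
  obtain ⟨s, hcard, hs⟩ := exists_indep_card_eq_indepNum G
  have hsum := G.sum_degrees_eq_twice_card_edges
  have hsle := sum_degree_le_card_edgeFinset G s hs
  simp only [hreg.degree_eq, Finset.sum_const, smul_eq_mul, Finset.card_univ, hcard, ← hA]
    at hsum hsle
  have hr : 0 < r := by
    obtain ⟨v⟩ := nonempty_of_one_le_minDegree hδ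
    exact hreg v ▸ hδ.trans (G.minDegree_le_degree v)
  have hge : indepNum G ≤ A.card := Nat.le_of_mul_le_mul_right (by lia) hr
  have heq : indepNum G = A.card := le_antisymm hge hle
  refine ⟨r, hreg, by lia, ?_⟩
  rw [heq]
  lia

/-- For a graph `G` with `n` vertices, `e` edges, minimum degree `δ ≥ 1`, maximum degree `Δ`,
and independence number `β`:
`Inv(G) ≥ (n − β)/Δ + (1/(βΔ³))(2β(βδ² + e²/(n − β)) − e² − 2β(n − β)Δ²)`, with equality iff
`G` is a regular balanced bipartite graph. -/
theorem stmt5 {V : Type*} [Fintype V] [DecidableEq V] (G : SimpleGraph V) [DecidableRel G.Adj]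
    (hδ : 1 ≤ G.minDegree) :
    invDegree G ≥ ((Fintype.card V : ℝ) - indepNum G) / (G.maxDegree : ℝ)
        + (1 / ((indepNum G : ℝ) * (G.maxDegree : ℝ) ^ 3)) *
          (2 * (indepNum G : ℝ) * ((indepNum G : ℝ) * (G.minDegree : ℝ) ^ 2
              + (G.edgeFinset.card : ℝ) ^ 2 / ((Fintype.card V : ℝ) - indepNum G))
            - (G.edgeFinset.card : ℝ) ^ 2
            - 2 * (indepNum G : ℝ) * ((Fintype.card V : ℝ) - indepNum G)
              * (G.maxDegree : ℝ) ^ 2) ∧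
    (invDegree G = ((Fintype.card V : ℝ) - indepNum G) / (G.maxDegree : ℝ)
        + (1 / ((indepNum G : ℝ) * (G.maxDegree : ℝ) ^ 3)) *
          (2 * (indepNum G : ℝ) * ((indepNum G : ℝ) * (G.minDegree : ℝ) ^ 2
              + (G.edgeFinset.card : ℝ) ^ 2 / ((Fintype.card V : ℝ) - indepNum G))
            - (G.edgeFinset.card : ℝ) ^ 2
            - 2 * (indepNum G : ℝ) * ((Fintype.card V : ℝ) - indepNum G)
              * (G.maxDegree : ℝ) ^ 2)
      ↔ IsRegularBalancedBipartite G) := by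
  have := nonempty_of_one_le_minDegree hδ
  obtain ⟨s, hcard, hs⟩ := exists_indep_card_eq_indepNum G
  have hlow := card_mul_minDegree_le_sum_degree G s
  have hmid := sum_degree_le_card_edgeFinset G s hs
  have hupp := card_edgeFinset_le_card_compl_mul_maxDegree G s hs
  have hβ : 0 < indepNum G := by
    obtain ⟨v⟩ := this
    exact card_le_indepNum G {v} (by simp)
  rw [hcard] at hlow
  have hcompl : (sᶜ.card : ℝ) = (Fintype.card V : ℝ) - indepNum G := by
    rw [Finset.card_compl, hcard, Nat.cast_sub (hcard ▸ s.card_le_univ)]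
  have hm : 0 < sᶜ.card := by
    have : 0 < indepNum G * G.minDegree := Nat.mul_pos hβ hδ
    exact Nat.pos_of_mul_pos_right (by lia : 0 < sᶜ.card * G.maxDegree)
  have hinv := card_div_maxDegree_le_invDegree G hδ
  have hsplit : (Fintype.card V : ℝ) = indepNum G + sᶜ.card := by rw [hcompl]; ring
  obtain ⟨hbound, heq⟩ := bound_le_add_div (b := indepNum G) (m := sᶜ.card) (d := G.minDegree)
    (D := G.maxDegree) (e := G.edgeFinset.card) (mod_cast hβ) (mod_cast hm) (mod_cast hδ)
    (mod_cast G.minDegree_le_maxDegree) (mod_cast hlow.trans hmid) (mod_cast hupp)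
  rw [← hcompl]
  rw [hsplit] at hinv
  refine ⟨hbound.trans hinv, fun h => ?_, fun h => ?_⟩
  · obtain ⟨hdD, hmb, he⟩ := heq (le_antisymm hbound (h ▸ hinv))
    norm_cast at hdD hmb he
    refine ⟨s, G.minDegree, ?_, ?_, fun v => ?_⟩
    · rw [← Finset.card_add_card_compl s, hmb, hcard]; ring
    · exact mem_iff_notMem_of_sum_degree_eq G s hs (le_antisymm hmid (he ▸ hlow))
    · exact le_antisymm (hdD ▸ G.degree_le_maxDegree v) (G.minDegree_le_degree v)
  · obtain ⟨r, hreg, hn, he⟩ := h.exists_parameters hδ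
    have hmin : G.minDegree = r := hreg.minDegree_eq
    have hmax : G.maxDegree = r := hreg.maxDegree_eq
    have hmb : (sᶜ.card : ℝ) = indepNum G := by
      rw [hcompl, ← hn]; push_cast; ring
    have hr : (r : ℝ) ≠ 0 := by
      rw [← hmin]; positivity
    have hβ' : (indepNum G : ℝ) ≠ 0 := by positivity
    simp only [invDegree, hreg.degree_eq, Finset.sum_const, Finset.card_univ, nsmul_eq_mul,
      hmb, hmin, hmax, he, ← hn]
    push_cast
    field_simp
    ring
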